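/- arXiv:2002.01010 — 2 statements merged into one kernel-verified Lean document; each statement's English description precedes it below -/
import Mathlib

section
/- Let n ≥ 1 and let (a_N)_{N≥0} = (a_{1,N},…,a_{n,N}) be a sequence of vectors of positive reals with lim_{N→∞} a_N/N = (α_1,…,α_n) where α_i > 0 for every i. Then the sequence of Dirichlet laws Dir(a_{1,N},…,a_{n,N}), viewed as probability measures on the simplex Δ = {x ∈ ℝ^n : x_i ≥ 0, x_1+⋯+x_n = 1}, satisfies a large deviation principle at speed N with good rate function I(x) = (sup_{y ∈ Δ, y_i > 0} Σ_i α_i log y_i) − Σ_i α_i log x_i for x in the interior of Δ (all x_i > 0), and I(x) = +∞ otherwise: for every closed F ⊆ Δ, limsup_{N} (1/N) log Dir_N(F) ≤ −inf_F I, and for every relatively open O ⊆ Δ, liminf_{N} (1/N) log Dir_N(O) ≥ −inf_O I. In particular when Σ_i α_i = 1, I(x) = Σ_i α_i(log α_i − log x_i) on the interior of Δ. -/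
open MeasureTheory Filter
open scoped ENNReal

noncomputable section

/-- The Dirichlet density on the coordinates `(x₁,…,x_{n−1})`, `n = m+1`, with parameters
`a ∈ (0,∞)ⁿ`: it equals `(Γ(Σa)/∏Γ(aᵢ)) · ∏ xᵢ^{aᵢ−1} · (1−Σx)^{aₙ−1}` on
`{x : xᵢ > 0, Σx < 1}` and `0` elsewhere. -/
def dirichletDensity (m : ℕ) (a : Fin (m + 1) → ℝ) (x : Fin m → ℝ) : ℝ≥0∞ :=
  ENNReal.ofReal <|
    if (∀ i, 0 < x i) ∧ ∑ i, x i < 1 then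
      (Real.Gamma (∑ i, a i) / ∏ i, Real.Gamma (a i)) *
        (∏ i : Fin m, x i ^ (a i.castSucc - 1)) * (1 - ∑ i, x i) ^ (a (Fin.last m) - 1)
    else 0

/-- The Dirichlet law `Dir(a)` on the simplex `Δ ⊆ ℝⁿ`, `n = m+1`, obtained by pushing the
density on the first `n−1` coordinates forward along `x ↦ (x, 1 − Σx)`. -/
def dirichletLaw (m : ℕ) (a : Fin (m + 1) → ℝ) : Measure (Fin (m + 1) → ℝ) :=
  Measure.map (fun x : Fin m → ℝ => Fin.snoc x (1 - ∑ i, x i))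
    ((volume : Measure (Fin m → ℝ)).withDensity (dirichletDensity m a))

/-- The simplex `Δ = {x ∈ ℝⁿ : xᵢ ≥ 0, Σ xᵢ = 1}`. -/
def simplex (m : ℕ) : Set (Fin (m + 1) → ℝ) :=
  {x | (∀ i, 0 ≤ x i) ∧ ∑ i, x i = 1}

/-- The rate function `I(x) = (sup_{y ∈ Δ, yᵢ>0} Σ αᵢ log yᵢ) − Σ αᵢ log xᵢ` on the
interior of the simplex, and `+∞` elsewhere. -/
def dirichletRate (m : ℕ) (α : Fin (m + 1) → ℝ) (x : Fin (m + 1) → ℝ) : EReal :=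
  if (∀ i, 0 < x i) ∧ ∑ i, x i = 1 then
    ((sSup {r : ℝ | ∃ y : Fin (m + 1) → ℝ, (∀ i, 0 < y i) ∧ ∑ i, y i = 1 ∧
        r = ∑ i, α i * Real.log (y i)} - ∑ i, α i * Real.log (x i) : ℝ) : EReal)
  else ⊤

/-!
On the open simplex the density of `Dir(a)` is `exp (log Cₐ + ∑ (aᵢ - 1) log yᵢ)` with
`Cₐ = Γ(∑ aᵢ) / ∏ Γ(aᵢ)`. Since `a_N - 1` is squeezed between multiples `N t_N α` with `t_N → 1`
and every `log yᵢ` is nonpositive, the sum is `N (1 + o(1)) ∑ αᵢ log yᵢ` uniformly in `y`. Hence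
Laplace's principle applies without any covering argument: bound the density by its supremum over
`F` and use that the simplex has finite volume, or bound it below on a small neighbourhood of a
given point, whose volume is a positive constant. The estimate `log Γ(x) = x log x - x + o(x)`
gives `(log Cₐ) / N → -∑ αᵢ log pᵢ` with `p = α / ∑ αⱼ`, and by Gibbs' inequality `p` is the point
at which `∑ αᵢ log yᵢ` attains its supremum over the simplex.
-/

open Real Set Topology

/-- The weighted sum `∑ αᵢ log xᵢ` of logarithms. With `α = a - 1` it is the exponent of the density
of `Dir(a)`; the rate function is, up to a constant, its negative. -/
def weightedLog {ι : Type*} [Fintype ι] (α x : ι → ℝ) : ℝ :=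
  ∑ i, α i * log (x i)

/-- The relative interior of the standard simplex: probability vectors with positive entries. -/
def openSimplex (ι : Type*) [Fintype ι] : Set (ι → ℝ) :=
  {x | (∀ i, 0 < x i) ∧ ∑ i, x i = 1}

/-- The vector `α / ∑ αⱼ` proportional to `α` with total mass one, which is the maximiser of
`weightedLog α` on the open simplex. -/
def normalizedWeights {ι : Type*} [Fintype ι] (α : ι → ℝ) : ι → ℝ :=
  fun i => α i / ∑ j, α j

section WeightedLog

variable {ι : Type*} [Fintype ι] {α β x : ι → ℝ}

theorem openSimplex_subset_stdSimplex : openSimplex ι ⊆ stdSimplex ℝ ι :=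
  fun _ hx => ⟨fun i => (hx.1 i).le, hx.2⟩

theorem le_one_of_mem_openSimplex (hx : x ∈ openSimplex ι) (i : ι) : x i ≤ 1 :=
  (mem_Icc_of_mem_stdSimplex (openSimplex_subset_stdSimplex hx) i).2

theorem measurableSet_openSimplex : MeasurableSet (openSimplex ι) :=
  (measurableSet_setOfPred.2 <| .forall fun i => measurableSet_setOfPred.1 <|
    measurableSet_lt measurable_const (measurable_pi_apply i)).inter
    (measurableSet_eq_fun (by fun_prop) measurable_const)

theorem weightedLog_smul (c : ℝ) : weightedLog (c • α) x = c * weightedLog α x := by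
  simp only [weightedLog, Finset.mul_sum, Pi.smul_apply, smul_eq_mul, mul_assoc]

theorem weightedLog_le_weightedLog_of_le (hx : x ∈ openSimplex ι) (h : α ≤ β) :
    weightedLog β x ≤ weightedLog α x :=
  Finset.sum_le_sum fun i _ => mul_le_mul_of_nonpos_right (h i)
    (log_nonpos (hx.1 i).le (le_one_of_mem_openSimplex hx i))

theorem measurable_weightedLog (α : ι → ℝ) : Measurable (weightedLog α) := by
  unfold weightedLog
  fun_prop

theorem continuousAt_weightedLog (α : ι → ℝ) (hx : ∀ i, x i ≠ 0) :
    ContinuousAt (weightedLog α) x :=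
  tendsto_finsetSum _ fun i _ => ((continuousAt_apply i x).log (hx i)).const_mul _

theorem exp_weightedLog (hx : ∀ i, 0 < x i) : exp (weightedLog α x) = ∏ i, x i ^ α i := by
  simp only [weightedLog, exp_sum, rpow_def_of_pos (hx _), mul_comm]

theorem normalizedWeights_mem_openSimplex [Nonempty ι] (hα : ∀ i, 0 < α i) :
    normalizedWeights α ∈ openSimplex ι := by
  have hA : 0 < ∑ j, α j := Finset.sum_pos (fun i _ => hα i) Finset.univ_nonempty
  refine ⟨fun i => div_pos (hα i) hA, ?_⟩
  simp only [normalizedWeights, ← Finset.sum_div, div_self hA.ne']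

theorem weightedLog_le_weightedLog_normalizedWeights (hα : ∀ i, 0 < α i)
    (hx : x ∈ openSimplex ι) : weightedLog α x ≤ weightedLog α (normalizedWeights α) := by
  -- Gibbs' inequality: bound `log (xᵢ / pᵢ)` by `xᵢ / pᵢ - 1`, where `p` is the normalised `α`.
  have hterm (i : ι) : α i * log (x i) ≤
      α i * log (normalizedWeights α i) + ((∑ j, α j) * x i - α i) := by
    have hA : 0 < ∑ j, α j := Finset.sum_pos (fun i _ => hα i) ⟨i, Finset.mem_univ i⟩
    have hp : 0 < normalizedWeights α i := div_pos (hα i) hA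
    have hlog : log (x i) - log (normalizedWeights α i) ≤ x i / normalizedWeights α i - 1 := by
      rw [← log_div (hx.1 i).ne' hp.ne']
      exact log_le_sub_one_of_pos (div_pos (hx.1 i) hp)
    have hratio : α i * (x i / normalizedWeights α i - 1) = (∑ j, α j) * x i - α i := by
      have := hα i
      unfold normalizedWeights
      field_simp
    linarith [mul_le_mul_of_nonneg_left hlog (hα i).le]
  refine (Finset.sum_le_sum fun i _ => hterm i).trans_eq ?_
  rw [Finset.sum_add_distrib, Finset.sum_sub_distrib, ← Finset.mul_sum, hx.2, mul_one, sub_self,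
    add_zero, weightedLog]

theorem isGreatest_weightedLog_image_openSimplex [Nonempty ι] (hα : ∀ i, 0 < α i) :
    IsGreatest (weightedLog α '' openSimplex ι) (weightedLog α (normalizedWeights α)) :=
  ⟨mem_image_of_mem _ (normalizedWeights_mem_openSimplex hα),
    forall_mem_image.2 fun _ => weightedLog_le_weightedLog_normalizedWeights hα⟩

theorem isCompact_openSimplex_inter_le_weightedLog (hα : ∀ i, 0 < α i) (c : ℝ) :
    IsCompact {x ∈ openSimplex ι | c ≤ weightedLog α x} := by
  -- After exponentiating, the condition is a closed one that also rules out vanishing coordinates.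
  have hset : {x ∈ openSimplex ι | c ≤ weightedLog α x} =
      stdSimplex ℝ ι ∩ {x | exp c ≤ ∏ i, x i ^ α i} := by
    ext x
    constructor
    · rintro ⟨hx, hc⟩
      exact ⟨openSimplex_subset_stdSimplex hx, (exp_le_exp.2 hc).trans_eq (exp_weightedLog hx.1)⟩
    · rintro ⟨hx, hc⟩
      have hpos (i : ι) : 0 < x i := by
        refine (hx.1 i).lt_of_ne' fun hi => (exp_pos c).not_ge (hc.trans_eq ?_)
        exact Finset.prod_eq_zero (Finset.mem_univ i) (by rw [hi, zero_rpow (hα i).ne'])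
      refine ⟨⟨hpos, hx.2⟩, exp_le_exp.1 ?_⟩
      rwa [exp_weightedLog hpos]
  rw [hset]
  refine (isCompact_stdSimplex ℝ ι).inter_right (isClosed_le continuous_const ?_)
  exact continuous_finsetProd _ fun i _ => (continuous_rpow_const (hα i).le).comp
    (continuous_apply i)

end WeightedLog

section GammaAsymptotics

variable {x : ℝ}

theorem rpow_self_mul_exp_neg_le_Gamma_add_one (hx : 0 ≤ x) : x ^ x * exp (-x) ≤ Gamma (x + 1) := by
  have hint := GammaIntegral_convergent (s := x + 1) (by linarith)
  have hsub : Ioi x ⊆ Ioi 0 := Ioi_subset_Ioi hx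
  rw [Gamma_eq_integral (by linarith)]
  calc x ^ x * exp (-x) = ∫ t in Ioi x, x ^ x * exp (-t) := by
        rw [integral_const_mul, integral_exp_neg_Ioi]
    _ ≤ ∫ t in Ioi x, exp (-t) * t ^ (x + 1 - 1) := by
        refine setIntegral_mono_on ((integrableOn_exp_neg_Ioi x).const_mul _)
          (hint.mono_set hsub) measurableSet_Ioi fun t ht => ?_
        rw [mul_comm, add_sub_cancel_right]
        gcongr
        exact (mem_Ioi.1 ht).le
    _ ≤ ∫ t in Ioi 0, exp (-t) * t ^ (x + 1 - 1) := by
        refine setIntegral_mono_set hint ?_ hsub.eventuallyLE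
        filter_upwards [ae_restrict_mem measurableSet_Ioi] with t ht
        exact mul_nonneg (exp_pos _).le (rpow_nonneg (mem_Ioi.1 ht).le _)

theorem Gamma_add_one_le_rpow_mul_exp_neg (hx : 0 ≤ x) :
    Gamma (x + 1) ≤ (x + 1) ^ (x + 1) * exp (-x) := by
  have hc : 0 < x + 1 := by linarith
  have hrate : -(x + 1)⁻¹ < 0 := by simpa using hc
  -- The tangent line of `log` at `x + 1` turns the integrand into a decaying exponential.
  have hpointwise (t : ℝ) (ht : t ∈ Ioi (0 : ℝ)) : exp (-t) * t ^ (x + 1 - 1) ≤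
      (x + 1) ^ x * exp (-x) * exp (-(x + 1)⁻¹ * t) := by
    have ht : 0 < t := ht
    rw [add_sub_cancel_right, rpow_def_of_pos ht, rpow_def_of_pos hc, ← exp_add, ← exp_add,
      ← exp_add, exp_le_exp]
    have hlog : log t - log (x + 1) ≤ t / (x + 1) - 1 := by
      rw [← log_div ht.ne' hc.ne']
      exact log_le_sub_one_of_pos (div_pos ht hc)
    have hsplit : x * (t / (x + 1)) = t - (x + 1)⁻¹ * t := by field_simp; ring
    linarith [mul_le_mul_of_nonneg_left hlog hx]
  rw [Gamma_eq_integral hc]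
  calc ∫ t in Ioi 0, exp (-t) * t ^ (x + 1 - 1)
      ≤ ∫ t in Ioi (0 : ℝ), (x + 1) ^ x * exp (-x) * exp (-(x + 1)⁻¹ * t) :=
        setIntegral_mono_on (GammaIntegral_convergent hc)
          ((integrableOn_exp_mul_Ioi hrate 0).const_mul _) measurableSet_Ioi hpointwise
    _ = (x + 1) ^ (x + 1) * exp (-x) := by
        rw [integral_const_mul, integral_exp_mul_Ioi hrate, rpow_add_one hc.ne']
        simp only [mul_zero, exp_zero, neg_div_neg_eq, one_div, inv_inv]
        ring

theorem neg_log_le_log_Gamma_sub (hx : 0 < x) : -log x ≤ log (Gamma x) - (x * log x - x) := by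
  have h := log_le_log (by positivity) (rpow_self_mul_exp_neg_le_Gamma_add_one hx.le)
  rw [Gamma_add_one hx.ne', log_mul hx.ne' (Gamma_pos_of_pos hx).ne',
    log_mul (by positivity) (by positivity), log_exp, log_rpow hx] at h
  linarith

theorem log_Gamma_sub_le_one_add_inv (hx : 0 < x) :
    log (Gamma x) - (x * log x - x) ≤ 1 + x⁻¹ := by
  have hc : 0 < x + 1 := by linarith
  have h := log_le_log (Gamma_pos_of_pos hc) (Gamma_add_one_le_rpow_mul_exp_neg hx.le)
  rw [Gamma_add_one hx.ne', log_mul hx.ne' (Gamma_pos_of_pos hx).ne',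
    log_mul (by positivity) (by positivity), log_exp, log_rpow hc] at h
  have hlog : log (x + 1) - log x ≤ x⁻¹ := by
    rw [← log_div hc.ne' hx.ne']
    refine (log_le_sub_one_of_pos (div_pos hc hx)).trans_eq ?_
    field_simp
    ring
  have hmul : (x + 1) * x⁻¹ = 1 + x⁻¹ := by field_simp
  linarith [mul_le_mul_of_nonneg_left hlog hc.le]

theorem tendsto_log_Gamma_sub_div_atTop :
    Tendsto (fun x : ℝ => (log (Gamma x) - (x * log x - x)) / x) atTop (𝓝 0) := by
  have hlower : Tendsto (fun x : ℝ => -log x / x) atTop (𝓝 0) := by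
    simpa [neg_div] using isLittleO_log_id_atTop.tendsto_div_nhds_zero.neg
  have hupper : Tendsto (fun x : ℝ => (1 + x⁻¹) / x) atTop (𝓝 0) :=
    (tendsto_inv_atTop_zero.const_add 1).div_atTop tendsto_id
  refine tendsto_of_tendsto_of_tendsto_of_le_of_le' hlower hupper ?_ ?_ <;>
    filter_upwards [eventually_gt_atTop 0] with x hx
  · exact div_le_div_of_nonneg_right (neg_log_le_log_Gamma_sub hx) hx.le
  · exact div_le_div_of_nonneg_right (log_Gamma_sub_le_one_add_inv hx) hx.le

theorem tendsto_log_Gamma_sub_mul_log_div {κ : Type*} {l : Filter κ} {b s : κ → ℝ} {β : ℝ}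
    (hs : Tendsto s l atTop) (hβ : 0 < β) (hb : Tendsto (fun k => b k / s k) l (𝓝 β)) :
    Tendsto (fun k => (log (Gamma (b k)) - b k * log (s k)) / s k) l (𝓝 (β * log β - β)) := by
  have hb_top : Tendsto b l atTop := hs.num hβ hb
  have hlim : Tendsto (fun k => (log (Gamma (b k)) - (b k * log (b k) - b k)) / b k * (b k / s k) +
      (b k / s k * log (b k / s k) - b k / s k)) l (𝓝 (0 * β + (β * log β - β))) :=
    ((tendsto_log_Gamma_sub_div_atTop.comp hb_top).mul hb).add ((hb.mul (hb.log hβ.ne')).sub hb)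
  rw [zero_mul, zero_add] at hlim
  refine hlim.congr' ?_
  filter_upwards [hs.eventually_gt_atTop 0, hb_top.eventually_gt_atTop 0] with k hsk hbk
  rw [log_div hbk.ne' hsk.ne']
  field_simp
  ring

end GammaAsymptotics

/-- The logarithm of the normalising constant `Γ(∑ aᵢ) / ∏ Γ(aᵢ)` of `Dir(a)`. -/
def dirichletLogConst {ι : Type*} [Fintype ι] (a : ι → ℝ) : ℝ :=
  log (Gamma (∑ i, a i)) - ∑ i, log (Gamma (a i))

section LogConst

variable {ι : Type*} [Fintype ι] [Nonempty ι]

theorem exp_dirichletLogConst {a : ι → ℝ} (ha : ∀ i, 0 < a i) :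
    exp (dirichletLogConst a) = Gamma (∑ i, a i) / ∏ i, Gamma (a i) := by
  have hsum : 0 < ∑ i, a i := Finset.sum_pos (fun i _ => ha i) Finset.univ_nonempty
  simp only [dirichletLogConst, exp_sub, exp_sum, exp_log (Gamma_pos_of_pos hsum),
    exp_log (Gamma_pos_of_pos (ha _))]

theorem tendsto_dirichletLogConst_div {κ : Type*} {l : Filter κ} {s : κ → ℝ} {a : κ → ι → ℝ}
    {α : ι → ℝ} (hs : Tendsto s l atTop) (hα : ∀ i, 0 < α i)
    (ha : ∀ i, Tendsto (fun k => a k i / s k) l (𝓝 (α i))) :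
    Tendsto (fun k => dirichletLogConst (a k) / s k) l
      (𝓝 (-weightedLog α (normalizedWeights α))) := by
  have hA : 0 < ∑ i, α i := Finset.sum_pos (fun i _ => hα i) Finset.univ_nonempty
  have hsum : Tendsto (fun k => (∑ i, a k i) / s k) l (𝓝 (∑ i, α i)) := by
    simpa only [Finset.sum_div] using tendsto_finsetSum _ fun i _ => ha i
  have hlim := (tendsto_log_Gamma_sub_mul_log_div hs hA hsum).sub
    (tendsto_finsetSum Finset.univ fun i _ => tendsto_log_Gamma_sub_mul_log_div hs (hα i) (ha i))
  convert! hlim using 2 with k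
  · simp only [dirichletLogConst, ← Finset.sum_div, Finset.sum_sub_distrib, ← Finset.sum_mul]
    ring
  · simp only [weightedLog, normalizedWeights, log_div (hα _).ne' hA.ne', mul_sub,
      Finset.sum_sub_distrib, ← Finset.sum_mul]
    ring

end LogConst

/-- The parametrisation `x ↦ (x, 1 - ∑ xᵢ)` of the hyperplane `∑ yᵢ = 1` by its first `m`
coordinates. -/
def simplexChart (m : ℕ) (x : Fin m → ℝ) : Fin (m + 1) → ℝ :=
  Fin.snoc x (1 - ∑ i, x i)

section DirichletLaw

variable {m : ℕ} {a : Fin (m + 1) → ℝ} {F V : Set (Fin (m + 1) → ℝ)} {T : ℝ}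

theorem continuous_simplexChart (m : ℕ) : Continuous (simplexChart m) :=
  Continuous.finSnoc (A := fun _ => ℝ) continuous_id (by fun_prop)

theorem sum_simplexChart (x : Fin m → ℝ) : ∑ i, simplexChart m x i = 1 := by
  simp [simplexChart, Fin.sum_univ_castSucc]

theorem simplexChart_mem_openSimplex_iff {x : Fin m → ℝ} :
    simplexChart m x ∈ openSimplex (Fin (m + 1)) ↔ (∀ i, 0 < x i) ∧ ∑ i, x i < 1 := by
  rw [openSimplex, mem_ofPred_eq, and_iff_left (sum_simplexChart x), Fin.forall_fin_succ']
  simp [simplexChart]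

theorem simplexChart_castSucc {y : Fin (m + 1) → ℝ} (hy : ∑ i, y i = 1) :
    simplexChart m (fun i => y i.castSucc) = y := by
  have hlast : 1 - ∑ i : Fin m, y i.castSucc = y (Fin.last m) := by
    rw [← hy, Fin.sum_univ_castSucc, add_sub_cancel_left]
  rw [simplexChart, hlast]
  exact Fin.snoc_init_self y

theorem volume_simplexChart_preimage_openSimplex_le_one :
    volume (simplexChart m ⁻¹' openSimplex (Fin (m + 1))) ≤ 1 := by
  have hsub : simplexChart m ⁻¹' openSimplex (Fin (m + 1)) ⊆ univ.pi fun _ => Icc 0 1 := by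
    intro x hx i _
    have hi : simplexChart m x i.castSucc = x i := by simp [simplexChart]
    exact hi ▸ ⟨(hx.1 _).le, le_one_of_mem_openSimplex hx _⟩
  refine (measure_mono hsub).trans_eq ?_
  rw [volume_pi_pi]
  simp

theorem volume_simplexChart_preimage_pos {y : Fin (m + 1) → ℝ}
    (hy : y ∈ openSimplex (Fin (m + 1))) (hV : V ∈ 𝓝 y) :
    0 < volume (simplexChart m ⁻¹' (V ∩ openSimplex (Fin (m + 1)))) := by
  set x : Fin m → ℝ := fun i => y i.castSucc
  have hxy : simplexChart m x = y := simplexChart_castSucc hy.2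
  have hpos : ∀ᶠ z in 𝓝 y, ∀ i, 0 < z i :=
    eventually_all.2 fun i => (continuousAt_apply i y).eventually (lt_mem_nhds (hy.1 i))
  have htendsto : Tendsto (simplexChart m) (𝓝 x) (𝓝 y) :=
    hxy ▸ (continuous_simplexChart m).tendsto x
  refine Measure.measure_pos_of_mem_nhds volume (x := x) ?_
  filter_upwards [htendsto hV, htendsto.eventually hpos] with z hzV hz
  exact ⟨hzV, hz, sum_simplexChart z⟩

theorem dirichletDensity_eq_indicator (ha : ∀ i, 0 < a i) :
    dirichletDensity m a = (simplexChart m ⁻¹' openSimplex (Fin (m + 1))).indicator fun x =>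
      ENNReal.ofReal (exp (dirichletLogConst a + weightedLog (a - 1) (simplexChart m x))) := by
  ext x
  by_cases hx : simplexChart m x ∈ openSimplex (Fin (m + 1))
  · rw [indicator_of_mem (mem_preimage.2 hx), dirichletDensity,
      if_pos (simplexChart_mem_openSimplex_iff.1 hx), exp_add, exp_dirichletLogConst ha,
      exp_weightedLog hx.1, Fin.prod_univ_castSucc (fun i => simplexChart m x i ^ (a - 1) i)]
    simp [simplexChart, mul_assoc]
  · rw [indicator_of_notMem (by exact hx), dirichletDensity,
      if_neg (mt simplexChart_mem_openSimplex_iff.2 hx), ENNReal.ofReal_zero]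

theorem dirichletLaw_apply (ha : ∀ i, 0 < a i) (hF : MeasurableSet F) :
    dirichletLaw m a F = ∫⁻ x in simplexChart m ⁻¹' (F ∩ openSimplex (Fin (m + 1))),
      ENNReal.ofReal (exp (dirichletLogConst a + weightedLog (a - 1) (simplexChart m x))) := by
  have hchart : Measurable (simplexChart m) := (continuous_simplexChart m).measurable
  change Measure.map (simplexChart m) _ F = _
  rw [Measure.map_apply hchart hF, withDensity_apply _ (hchart hF),
    dirichletDensity_eq_indicator ha,
    setLIntegral_indicator (hchart measurableSet_openSimplex), ← preimage_inter, inter_comm]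

theorem dirichletLaw_le (ha : ∀ i, 0 < a i) (hF : MeasurableSet F)
    (hT : ∀ y ∈ F ∩ openSimplex (Fin (m + 1)), weightedLog (a - 1) y ≤ T) :
    dirichletLaw m a F ≤ ENNReal.ofReal (exp (dirichletLogConst a + T)) := by
  rw [dirichletLaw_apply ha hF]
  calc _ ≤ ∫⁻ _ in simplexChart m ⁻¹' (F ∩ openSimplex (Fin (m + 1))),
          ENNReal.ofReal (exp (dirichletLogConst a + T)) := by
        refine setLIntegral_mono measurable_const fun x hx => ?_
        gcongr
        exact hT _ hx
    _ = ENNReal.ofReal (exp (dirichletLogConst a + T)) *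
          volume (simplexChart m ⁻¹' (F ∩ openSimplex (Fin (m + 1)))) := setLIntegral_const _ _
    _ ≤ ENNReal.ofReal (exp (dirichletLogConst a + T)) :=
        mul_le_of_le_one_right' <| (measure_mono (preimage_mono inter_subset_right)).trans
          volume_simplexChart_preimage_openSimplex_le_one

theorem le_dirichletLaw (ha : ∀ i, 0 < a i) (hF : MeasurableSet F)
    (hV : V ⊆ F ∩ openSimplex (Fin (m + 1))) (hT : ∀ y ∈ V, T ≤ weightedLog (a - 1) y) :
    ENNReal.ofReal (exp (dirichletLogConst a + T)) * volume (simplexChart m ⁻¹' V) ≤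
      dirichletLaw m a F := by
  have hmeas : Measurable fun x => weightedLog (a - 1) (simplexChart m x) :=
    (measurable_weightedLog _).comp (continuous_simplexChart m).measurable
  rw [dirichletLaw_apply ha hF, ← setLIntegral_const]
  refine (setLIntegral_mono (by fun_prop) fun x hx => ?_).trans
    (lintegral_mono_set (preimage_mono hV))
  gcongr
  exact hT _ hx

end DirichletLaw

section DirichletRate

variable {m : ℕ} {α x : Fin (m + 1) → ℝ}

theorem dirichletRate_of_mem_openSimplex (hα : ∀ i, 0 < α i)
    (hx : x ∈ openSimplex (Fin (m + 1))) : dirichletRate m α x =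
      ((weightedLog α (normalizedWeights α) - weightedLog α x : ℝ) : EReal) := by
  have hset : {r : ℝ | ∃ y : Fin (m + 1) → ℝ, (∀ i, 0 < y i) ∧ ∑ i, y i = 1 ∧
      r = ∑ i, α i * log (y i)} = weightedLog α '' openSimplex (Fin (m + 1)) := by
    ext r
    simp only [mem_ofPred_eq, mem_image, openSimplex, weightedLog, and_assoc, eq_comm]
  rw [dirichletRate, if_pos ⟨hx.1, hx.2⟩, hset,
    (isGreatest_weightedLog_image_openSimplex hα).csSup_eq, weightedLog, weightedLog]

theorem dirichletRate_of_notMem_openSimplex (hx : x ∉ openSimplex (Fin (m + 1))) :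
    dirichletRate m α x = ⊤ :=
  if_neg hx

theorem isCompact_dirichletRate_le (hα : ∀ i, 0 < α i) (c : ℝ) :
    IsCompact {x | dirichletRate m α x ≤ (c : EReal)} := by
  convert! isCompact_openSimplex_inter_le_weightedLog hα
    (weightedLog α (normalizedWeights α) - c) using 1
  ext x
  by_cases hx : x ∈ openSimplex (Fin (m + 1))
  · simp only [mem_ofPred_eq, dirichletRate_of_mem_openSimplex hα hx, EReal.coe_le_coe_iff, hx,
      true_and]
    exact sub_le_comm
  · simp [dirichletRate_of_notMem_openSimplex hx, hx]

theorem dirichletRate_eq_sum_of_sum_eq_one (hα : ∀ i, 0 < α i) (hα₁ : ∑ i, α i = 1)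
    (hx : x ∈ openSimplex (Fin (m + 1))) :
    dirichletRate m α x = ((∑ i, α i * (log (α i) - log (x i)) : ℝ) : EReal) := by
  simp only [dirichletRate_of_mem_openSimplex hα hx, weightedLog, normalizedWeights, hα₁, div_one,
    mul_sub, Finset.sum_sub_distrib]

end DirichletRate

section LargeDeviations

variable {κ : Type*} {l : Filter κ} {s : κ → ℝ}

theorem inv_mul_log_ofReal_exp (s w : ℝ) :
    ((s⁻¹ : ℝ) : EReal) * ENNReal.log (ENNReal.ofReal (exp w)) = ((w / s : ℝ) : EReal) := by
  rw [ENNReal.log_ofReal_of_pos (exp_pos w), log_exp, ← EReal.coe_mul, div_eq_inv_mul]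

theorem limsup_inv_mul_log_le {μ : κ → ℝ≥0∞} {w : κ → ℝ} {r : ℝ} (hs : Tendsto s l atTop)
    (hw : Tendsto (fun k => w k / s k) l (𝓝 r))
    (hμ : ∀ᶠ k in l, μ k ≤ ENNReal.ofReal (exp (w k))) :
    limsup (fun k => (((s k)⁻¹ : ℝ) : EReal) * ENNReal.log (μ k)) l ≤ r := by
  rcases l.eq_or_neBot with rfl | _
  · simp
  rw [← (EReal.tendsto_coe.2 hw).limsup_eq]
  refine limsup_le_limsup ?_
  filter_upwards [hs.eventually_ge_atTop 0, hμ] with k hk hμk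
  rw [← inv_mul_log_ofReal_exp]
  exact mul_le_mul_of_nonneg_left (ENNReal.log_monotone hμk) (by exact_mod_cast inv_nonneg.2 hk)

theorem le_liminf_inv_mul_log {μ : κ → ℝ≥0∞} {w : κ → ℝ} {r : ℝ} (hs : Tendsto s l atTop)
    (hw : Tendsto (fun k => w k / s k) l (𝓝 r))
    (hμ : ∀ᶠ k in l, ENNReal.ofReal (exp (w k)) ≤ μ k) :
    r ≤ liminf (fun k => (((s k)⁻¹ : ℝ) : EReal) * ENNReal.log (μ k)) l := by
  rcases l.eq_or_neBot with rfl | _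
  · simp
  rw [← (EReal.tendsto_coe.2 hw).liminf_eq]
  refine liminf_le_liminf ?_
  filter_upwards [hs.eventually_ge_atTop 0, hμ] with k hk hμk
  rw [← inv_mul_log_ofReal_exp]
  exact mul_le_mul_of_nonneg_left (ENNReal.log_monotone hμk) (by exact_mod_cast inv_nonneg.2 hk)

section Comparison

variable {ι : Type*} {b : κ → ι → ℝ} {α : ι → ℝ}

theorem tendsto_sub_one_div (hs : Tendsto s l atTop)
    (hb : ∀ i, Tendsto (fun k => b k i / s k) l (𝓝 (α i))) (i : ι) :
    Tendsto (fun k => (b k - 1) i / s k) l (𝓝 (α i)) := by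
  simpa [sub_div] using (hb i).sub hs.inv_tendsto_atTop

variable [Finite ι]

theorem eventually_forall_pos_of_tendsto_div (hs : Tendsto s l atTop) (hα : ∀ i, 0 < α i)
    (hb : ∀ i, Tendsto (fun k => b k i / s k) l (𝓝 (α i))) : ∀ᶠ k in l, ∀ i, 0 < b k i :=
  eventually_all.2 fun i => (hs.num (hα i) (hb i)).eventually_gt_atTop 0

variable [Nonempty ι]

theorem exists_tendsto_one_smul_le (hs : ∀ᶠ k in l, 0 < s k) (hα : ∀ i, 0 < α i)
    (hb : ∀ i, Tendsto (fun k => b k i / s k) l (𝓝 (α i))) :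
    ∃ t : κ → ℝ, Tendsto t l (𝓝 1) ∧ ∀ᶠ k in l, (s k * t k) • α ≤ b k := by
  cases nonempty_fintype ι
  refine ⟨fun k => Finset.univ.inf' Finset.univ_nonempty fun i => b k i / s k / α i, ?_, ?_⟩
  · have h := Tendsto.finset_inf'_nhds_apply Finset.univ_nonempty fun i _ =>
      (hb i).div_const (α i)
    simpa only [div_self (hα _).ne', Finset.inf'_const] using h
  · filter_upwards [hs] with k hk i
    have h := Finset.inf'_le (fun i => b k i / s k / α i) (Finset.mem_univ i)
    rwa [div_div, le_div_iff₀ (mul_pos hk (hα i)), mul_left_comm, ← mul_assoc] at h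

theorem exists_tendsto_one_le_smul (hs : ∀ᶠ k in l, 0 < s k) (hα : ∀ i, 0 < α i)
    (hb : ∀ i, Tendsto (fun k => b k i / s k) l (𝓝 (α i))) :
    ∃ t : κ → ℝ, Tendsto t l (𝓝 1) ∧ ∀ᶠ k in l, b k ≤ (s k * t k) • α := by
  cases nonempty_fintype ι
  refine ⟨fun k => Finset.univ.sup' Finset.univ_nonempty fun i => b k i / s k / α i, ?_, ?_⟩
  · have h := Tendsto.finset_sup'_nhds_apply Finset.univ_nonempty fun i _ =>
      (hb i).div_const (α i)
    simpa only [div_self (hα _).ne', Finset.sup'_const] using h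
  · filter_upwards [hs] with k hk i
    have h := Finset.le_sup' (fun i => b k i / s k / α i) (Finset.mem_univ i)
    rwa [div_div, div_le_iff₀ (mul_pos hk (hα i)), mul_left_comm, ← mul_assoc] at h

end Comparison

variable {m : ℕ} {a : κ → Fin (m + 1) → ℝ} {α : Fin (m + 1) → ℝ}

theorem limsup_log_dirichletLaw_le {F : Set (Fin (m + 1) → ℝ)} (hs : Tendsto s l atTop)
    (hα : ∀ i, 0 < α i) (ha : ∀ i, Tendsto (fun k => a k i / s k) l (𝓝 (α i)))
    (hF : MeasurableSet F) :
    limsup (fun k => (((s k)⁻¹ : ℝ) : EReal) * ENNReal.log (dirichletLaw m (a k) F)) l ≤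
      -⨅ x ∈ F, dirichletRate m α x := by
  refine EReal.le_of_forall_lt_iff_le.1 fun z hz => ?_
  set S := weightedLog α (normalizedWeights α)
  have hF_le (y : Fin (m + 1) → ℝ) (hy : y ∈ F ∩ openSimplex (Fin (m + 1))) :
      weightedLog α y ≤ S + z := by
    have h : ((-z : ℝ) : EReal) < dirichletRate m α y :=
      (EReal.neg_lt_comm.1 hz).trans_le (iInf₂_le y hy.1)
    rw [dirichletRate_of_mem_openSimplex hα hy.2, EReal.coe_lt_coe_iff] at h
    linarith
  have hs_pos : ∀ᶠ k in l, 0 < s k := hs.eventually_gt_atTop 0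
  obtain ⟨t, ht, hta⟩ := exists_tendsto_one_smul_le hs_pos hα (tendsto_sub_one_div hs ha)
  refine limsup_inv_mul_log_le hs
    (w := fun k => dirichletLogConst (a k) + s k * t k * (S + z)) ?_ ?_
  · have hlim := (tendsto_dirichletLogConst_div hs hα ha).add (ht.mul_const (S + z))
    rw [one_mul, neg_add_cancel_left] at hlim
    refine hlim.congr' ?_
    filter_upwards [hs_pos] with k hk
    field_simp
  · filter_upwards [hs_pos, ht.eventually (lt_mem_nhds one_pos), hta,
      eventually_forall_pos_of_tendsto_div hs hα ha] with k hsk htk htak hak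
    refine dirichletLaw_le hak hF fun y hy => ?_
    calc weightedLog (a k - 1) y ≤ s k * t k * weightedLog α y :=
          (weightedLog_le_weightedLog_of_le hy.2 htak).trans_eq (weightedLog_smul _)
      _ ≤ s k * t k * (S + z) := by gcongr; exact hF_le y hy

theorem neg_dirichletRate_le_liminf_log_dirichletLaw {U : Set (Fin (m + 1) → ℝ)}
    {x : Fin (m + 1) → ℝ} (hs : Tendsto s l atTop) (hα : ∀ i, 0 < α i)
    (ha : ∀ i, Tendsto (fun k => a k i / s k) l (𝓝 (α i))) (hU : IsOpen U) (hxU : x ∈ U)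
    (hx : x ∈ openSimplex (Fin (m + 1))) :
    -dirichletRate m α x ≤ liminf (fun k => (((s k)⁻¹ : ℝ) : EReal) *
      ENNReal.log (dirichletLaw m (a k) (U ∩ simplex m))) l := by
  rw [dirichletRate_of_mem_openSimplex hα hx, ← EReal.coe_neg, neg_sub]
  refine EReal.ge_of_forall_gt_iff_ge.1 fun z hz => ?_
  rw [EReal.coe_lt_coe_iff] at hz
  set S := weightedLog α (normalizedWeights α)
  set V := U ∩ {y | S + z < weightedLog α y}
  have hV : V ∈ 𝓝 x := inter_mem (hU.mem_nhds hxU) <|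
    (continuousAt_weightedLog α fun i => (hx.1 i).ne').eventually (lt_mem_nhds (by linarith))
  set v := volume (simplexChart m ⁻¹' (V ∩ openSimplex (Fin (m + 1))))
  have hv : 0 < v.toReal :=
    ENNReal.toReal_pos (volume_simplexChart_preimage_pos hx hV).ne' <|
      ne_top_of_le_ne_top ENNReal.one_ne_top <|
        (measure_mono (preimage_mono inter_subset_right)).trans
          volume_simplexChart_preimage_openSimplex_le_one
  have hs_pos : ∀ᶠ k in l, 0 < s k := hs.eventually_gt_atTop 0
  obtain ⟨t, ht, hta⟩ := exists_tendsto_one_le_smul hs_pos hα (tendsto_sub_one_div hs ha)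
  refine le_liminf_inv_mul_log hs
    (w := fun k => dirichletLogConst (a k) + s k * t k * (S + z) + log v.toReal) ?_ ?_
  · have hlim := ((tendsto_dirichletLogConst_div hs hα ha).add (ht.mul_const (S + z))).add
      (hs.const_div_atTop (log v.toReal))
    rw [one_mul, neg_add_cancel_left, add_zero] at hlim
    refine hlim.congr' ?_
    filter_upwards [hs_pos] with k hk
    field_simp
  · filter_upwards [hs_pos, ht.eventually (lt_mem_nhds one_pos), hta,
      eventually_forall_pos_of_tendsto_div hs hα ha] with k hsk htk htak hak
    rw [exp_add, exp_log hv, ENNReal.ofReal_mul (exp_pos _).le,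
      ENNReal.ofReal_toReal (ENNReal.toReal_pos_iff.1 hv).2.ne]
    refine le_dirichletLaw hak
      (hU.measurableSet.inter (isClosed_stdSimplex ℝ (Fin (m + 1))).measurableSet)
      (fun y hy => ⟨⟨hy.1.1, openSimplex_subset_stdSimplex hy.2⟩, hy.2⟩) fun y hy => ?_
    calc s k * t k * (S + z) ≤ s k * t k * weightedLog α y := by gcongr; exact hy.1.2.le
      _ ≤ weightedLog (a k - 1) y :=
          (weightedLog_smul _).symm.trans_le (weightedLog_le_weightedLog_of_le hy.2 htak)

theorem le_liminf_log_dirichletLaw {U : Set (Fin (m + 1) → ℝ)} (hs : Tendsto s l atTop)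
    (hα : ∀ i, 0 < α i) (ha : ∀ i, Tendsto (fun k => a k i / s k) l (𝓝 (α i))) (hU : IsOpen U) :
    -(⨅ x ∈ U ∩ simplex m, dirichletRate m α x) ≤
      liminf (fun k => (((s k)⁻¹ : ℝ) : EReal) *
        ENNReal.log (dirichletLaw m (a k) (U ∩ simplex m))) l := by
  refine EReal.neg_le.2 (le_iInf₂ fun x hx => EReal.neg_le.1 ?_)
  by_cases hx' : x ∈ openSimplex (Fin (m + 1))
  · exact neg_dirichletRate_le_liminf_log_dirichletLaw hs hα ha hU hx.1 hx'
  · simp [dirichletRate_of_notMem_openSimplex hx']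

end LargeDeviations

theorem dirichlet_ldp_general {κ : Type*} {l : Filter κ} {s : κ → ℝ} (hs : Tendsto s l atTop)
    {m : ℕ} {a : κ → Fin (m + 1) → ℝ} {α : Fin (m + 1) → ℝ} (hα : ∀ i, 0 < α i)
    (ha : ∀ i, Tendsto (fun k => a k i / s k) l (𝓝 (α i))) :
    (∀ c : ℝ, IsCompact {x | dirichletRate m α x ≤ (c : EReal)}) ∧
    (∀ F, MeasurableSet F →
      limsup (fun k => (((s k)⁻¹ : ℝ) : EReal) * ENNReal.log (dirichletLaw m (a k) F)) l ≤
        -(⨅ x ∈ F, dirichletRate m α x)) ∧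
    (∀ O, (∃ U, IsOpen U ∧ O = U ∩ simplex m) → -(⨅ x ∈ O, dirichletRate m α x) ≤
      liminf (fun k => (((s k)⁻¹ : ℝ) : EReal) * ENNReal.log (dirichletLaw m (a k) O)) l) ∧
    (∑ i, α i = 1 → ∀ x : Fin (m + 1) → ℝ, (∀ i, 0 < x i) → ∑ i, x i = 1 →
      dirichletRate m α x = ((∑ i, α i * (log (α i) - log (x i)) : ℝ) : EReal)) := by
  refine ⟨isCompact_dirichletRate_le hα, fun F => limsup_log_dirichletLaw_le hs hα ha, ?_,
    fun hα₁ x hx hx₁ => dirichletRate_eq_sum_of_sum_eq_one hα hα₁ ⟨hx, hx₁⟩⟩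
  rintro _ ⟨U, hU, rfl⟩
  exact le_liminf_log_dirichletLaw hs hα ha hU

/-- Large deviation principle at speed `N` for Dirichlet laws
`Dir(a_N)` with `a_N / N → α`, `αᵢ > 0`, with good rate function `dirichletRate`:
upper bound over closed subsets of the simplex, lower bound over relatively open
subsets, compact sublevel sets, and the identification `I(x) = Σ αᵢ(log αᵢ − log xᵢ)`
on the interior when `Σ αᵢ = 1`. -/
theorem dirichlet_ldp
    (m : ℕ) (a : ℕ → Fin (m + 1) → ℝ) (hapos : ∀ N i, 0 < a N i)
    (α : Fin (m + 1) → ℝ) (hαpos : ∀ i, 0 < α i)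
    (hlim : ∀ i, Tendsto (fun N : ℕ => a N i / (N : ℝ)) atTop (nhds (α i))) :
    (∀ c : ℝ, IsCompact {x : Fin (m + 1) → ℝ | dirichletRate m α x ≤ (c : EReal)}) ∧
    (∀ F : Set (Fin (m + 1) → ℝ), IsClosed F → F ⊆ simplex m →
      limsup (fun N : ℕ => (((N : ℝ)⁻¹ : ℝ) : EReal) *
          ENNReal.log (dirichletLaw m (a N) F)) atTop
        ≤ -(⨅ x ∈ F, dirichletRate m α x)) ∧
    (∀ O : Set (Fin (m + 1) → ℝ), (∃ U, IsOpen U ∧ O = U ∩ simplex m) →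
      -(⨅ x ∈ O, dirichletRate m α x)
        ≤ liminf (fun N : ℕ => (((N : ℝ)⁻¹ : ℝ) : EReal) *
            ENNReal.log (dirichletLaw m (a N) O)) atTop) ∧
    ((∑ i, α i = 1) → ∀ x : Fin (m + 1) → ℝ, (∀ i, 0 < x i) → ∑ i, x i = 1 →
      dirichletRate m α x =
        ((∑ i, α i * (Real.log (α i) - Real.log (x i)) : ℝ) : EReal)) := by
  obtain ⟨hgood, hupper, hlower, hrate⟩ :=
    dirichlet_ldp_general tendsto_natCast_atTop_atTop hαpos hlim
  exact ⟨hgood, fun F hF _ => hupper F hF.measurableSet, hlower, hrate⟩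

end
end

section
/- Let σ : [0,1]² → [0,∞) be a bounded continuous symmetric function, and for θ > 0 set F(σ,θ) = sup over probability measures μ on [0,1] of θ²·P(σ,μ) − (1/2)·D(Leb‖μ), where P(σ,μ) = ∫∫σ²(x,y)dμ(x)dμ(y) and D(Leb‖μ) is the Kullback–Leibler divergence of Lebesgue measure on [0,1] with respect to μ. Then: (i) for every θ > 0 the supremum is attained by some probability measure on [0,1]; (ii) |F(σ,θ) − F(σ,θ')| ≤ (sup_{x,y}σ²(x,y))·|θ² − θ'²| for all θ, θ' > 0, so F(σ,·) is continuous in θ. -/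
open MeasureTheory

noncomputable section

/-- Lebesgue measure restricted to `[0,1]`. -/
def leb01 : Measure ℝ := volume.restrict (Set.Icc (0:ℝ) 1)

/-- `P(σ,μ) = ∫∫ σ²(x,y) dμ(x) dμ(y)`. -/
def Pfun (σ : ℝ → ℝ → ℝ) (μ : Measure ℝ) : ℝ := ∫ x, ∫ y, σ x y ^ 2 ∂μ ∂μ

/-- The Kullback–Leibler divergence `D(Leb‖μ)` of Lebesgue measure on `[0,1]` with respect
to `μ`, which is finite exactly when `Leb ≪ μ` and `log (dLeb/dμ)` is integrable. -/
def klLeb (μ : Measure ℝ) : ℝ :=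
  ∫ x, Real.log ((leb01.rnDeriv μ x).toReal) ∂leb01

/-- The set of values `θ² P(σ,μ) − (1/2) D(Leb‖μ)` as `μ` ranges over Borel probability
measures on `[0,1]` with finite Kullback–Leibler divergence `D(Leb‖μ)` (measures with
`D(Leb‖μ) = +∞` contribute `−∞` and are irrelevant for the supremum `F(σ,θ)`). -/
def valSet (σ : ℝ → ℝ → ℝ) (θ : ℝ) : Set ℝ :=
  {r : ℝ | ∃ μ : Measure ℝ, IsProbabilityMeasure μ ∧ μ (Set.Icc (0:ℝ) 1)ᶜ = 0 ∧
    leb01 ≪ μ ∧ Integrable (fun x => Real.log ((leb01.rnDeriv μ x).toReal)) leb01 ∧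
    r = θ ^ 2 * Pfun σ μ - (1 / 2) * klLeb μ}

/-- `F(σ,θ) = sup_{μ ∈ P([0,1])} ( θ² P(σ,μ) − (1/2) D(Leb‖μ) )`. -/
def Fsup (σ : ℝ → ℝ → ℝ) (θ : ℝ) : ℝ := sSup (valSet σ θ)

/-!
By the Donsker–Varadhan formula, `D(Leb‖μ)` is the supremum over bounded continuous `f` of
`∫ f dLeb - ∫ (e^f - 1) dμ`, which is weakly continuous in `μ`; hence `D(Leb‖·)` is weakly lower
semicontinuous. Since `P(σ,·)` is weakly continuous on the compact space `P([0,1])`, the objective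
attains its supremum there. At a maximiser for `θ`, replacing `θ` by `θ'` changes the objective by
`(θ² - θ'²) P(σ,μ)`, and `0 ≤ P(σ,μ) ≤ sup σ²`, which gives the Lipschitz bound in `θ²`.
-/

section KullbackLeibler

open InformationTheory Filter Topology Set BoundedContinuousFunction ENNReal
open Real (exp log)

lemma mul_sub_exp_sub_one_le_klFun {r : ℝ} (hr : 0 ≤ r) (a : ℝ) :
    r * a - (exp a - 1) ≤ klFun r := by
  rcases hr.eq_or_lt with rfl | hr
  · simp only [zero_mul, klFun_zero]
    linarith [Real.exp_pos a]
  have htangent : r * (a - log r + 1) ≤ exp a := by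
    calc r * (a - log r + 1) ≤ r * exp (a - log r) := by
          gcongr
          exact Real.add_one_le_exp _
      _ = exp a := by
          rw [Real.exp_sub, Real.exp_log hr]
          field_simp
  rw [klFun_apply]
  linarith

/-- The value `r` clamped to the interval `[e⁻ⁿ, eⁿ]`; its logarithm is a bounded substitute for
`log r`, the optimal `a` in the Fenchel–Young inequality `mul_sub_exp_sub_one_le_klFun`. Clamping
before taking the logarithm avoids the junk value `log 0 = 0`. -/
def expClamp (n : ℕ) (r : ℝ) : ℝ := max (exp (-n)) (min r (exp n))

lemma expClamp_pos (n : ℕ) (r : ℝ) : 0 < expClamp n r :=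
  (Real.exp_pos _).trans_le (le_max_left _ _)

lemma measurable_log_expClamp (n : ℕ) : Measurable fun r => log (expClamp n r) := by
  unfold expClamp
  fun_prop

lemma abs_log_expClamp_le (n : ℕ) (r : ℝ) : |log (expClamp n r)| ≤ n := by
  have hpos := expClamp_pos n r
  rw [abs_le, Real.le_log_iff_exp_le hpos, Real.log_le_iff_le_exp hpos]
  exact ⟨le_max_left _ _, max_le (Real.exp_le_exp.2 (neg_le_self n.cast_nonneg)) (min_le_right _ _)⟩

lemma klFun_approx_nonneg (n : ℕ) (r : ℝ) :
    0 ≤ r * log (expClamp n r) - (exp (log (expClamp n r)) - 1) := by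
  set t := expClamp n r
  have ht0 : 0 < t := expClamp_pos n r
  have hle : exp (-n) ≤ 1 := Real.exp_le_one_iff.2 (by simp)
  have hge : 1 ≤ exp n := Real.one_le_exp n.cast_nonneg
  -- The clamp moves `r` towards `1`, so `r - t` has the sign of `log t`.
  have hsign : 0 ≤ (r - t) * log t := by
    rcases le_total r 1 with hr | hr
    · have hrt : r ≤ t := (le_min le_rfl (hr.trans hge)).trans (le_max_right _ _)
      have ht1 : t ≤ 1 := max_le hle ((min_le_left _ _).trans hr)
      exact mul_nonneg_of_nonpos_of_nonpos (sub_nonpos.2 hrt) (Real.log_nonpos ht0.le ht1)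
    · have hrt : t ≤ r := max_le (hle.trans hr) (min_le_left _ _)
      have ht1 : 1 ≤ t := (le_min hr hge).trans (le_max_right _ _)
      exact mul_nonneg (sub_nonneg.2 hrt) (Real.log_nonneg ht1)
  have hklFun : 0 ≤ t * log t + 1 - t := klFun_nonneg ht0.le
  rw [Real.exp_log ht0]
  linarith

lemma tendsto_klFun_approx {r : ℝ} (hr : 0 ≤ r) :
    Tendsto (fun n => r * log (expClamp n r) - (exp (log (expClamp n r)) - 1)) atTop
      (𝓝 (klFun r)) := by
  simp only [Real.exp_log (expClamp_pos _ _)]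
  rcases hr.eq_or_lt with rfl | hr
  · have hclamp (n : ℕ) : expClamp n 0 = exp (-n) := by
      simp [expClamp, (Real.exp_pos _).le]
    simp only [zero_mul, hclamp, klFun_zero]
    simpa using ((Real.tendsto_exp_neg_atTop_nhds_zero.comp
      tendsto_natCast_atTop_atTop).sub_const 1).const_sub 0
  · refine tendsto_const_nhds.congr' ?_
    filter_upwards [eventually_ge_atTop ⌈|log r|⌉₊] with n hn
    obtain ⟨hlower, hupper⟩ := abs_le.1 (Nat.ceil_le.1 hn)
    have hclamp : expClamp n r = r := by
      rw [expClamp, min_eq_left ((Real.log_le_iff_le_exp hr).1 hupper),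
        max_eq_right ((Real.le_log_iff_exp_le hr).1 hlower)]
    rw [hclamp, klFun_apply]
    ring

lemma exp_sub_exp_le {a b M : ℝ} (ha : a ≤ M) : exp a - exp b ≤ exp M * |a - b| := by
  calc exp a - exp b = exp a * (1 - exp (b - a)) := by
        rw [mul_sub, mul_one, ← Real.exp_add, add_sub_cancel]
    _ ≤ exp a * |a - b| := by
        gcongr
        linarith [Real.add_one_le_exp (b - a), le_abs_self (a - b)]
    _ ≤ exp M * |a - b| := by gcongr

variable {X : Type*} [TopologicalSpace X]

/-- The truncation of `g` to `[-M, M]`. -/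
def boundedClamp (M : ℝ) (g : X →ᵇ ℝ) : X →ᵇ ℝ := .const X (-M) ⊔ (g ⊓ .const X M)

lemma abs_boundedClamp_le {M : ℝ} (hM : 0 ≤ M) (g : X →ᵇ ℝ) (x : X) : |boundedClamp M g x| ≤ M :=
  abs_le.2 ⟨le_max_left _ _, max_le (neg_le_self hM) (min_le_right _ _)⟩

lemma abs_sub_boundedClamp_le {a M : ℝ} (ha : |a| ≤ M) (g : X →ᵇ ℝ) (x : X) :
    |a - boundedClamp M g x| ≤ |a - g x| := by
  obtain ⟨hlower, hupper⟩ := abs_le.1 ha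
  calc |a - boundedClamp M g x| = |max (-M) (min a M) - max (-M) (min (g x) M)| := by
        rw [min_eq_left hupper, max_eq_right hlower]
        rfl
    _ ≤ |min a M - min (g x) M| := by simpa using abs_max_sub_max_le_max (-M) (min a M) (-M) _
    _ ≤ |a - g x| := by simpa using abs_min_sub_min_le_max a M (g x) M

variable {Ω : Type*} [MeasurableSpace Ω]

/-- The functional `f ↦ ∫ f dμ - ∫ (e^f - 1) dν` whose supremum is `klDiv μ ν`: the
Donsker–Varadhan formula in its form for finite measures, without a logarithm around `∫ e^f dν`. -/
def dvFunctional (μ ν : Measure Ω) (f : Ω → ℝ) : ℝ :=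
  ∫ x, f x ∂μ - ∫ x, (exp (f x) - 1) ∂ν

lemma dvFunctional_indicator_const {μ ν : Measure Ω} {A : Set Ω} (hA : MeasurableSet A)
    (hνA : ν A = 0) (c : ℝ) :
    dvFunctional μ ν (A.indicator fun _ => c) = c * μ.real A := by
  have hvanish : (fun x => exp (A.indicator (fun _ => c) x) - 1) =ᵐ[ν] fun _ => 0 := by
    filter_upwards [measure_eq_zero_iff_ae_notMem.1 hνA] with x hx
    simp [hx]
  rw [dvFunctional, integral_indicator_const c hA, integral_congr_ae hvanish, integral_zero,
    sub_zero, smul_eq_mul, mul_comm]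

lemma absolutelyContinuous_of_dvFunctional_le {μ ν : Measure Ω} [IsFiniteMeasure μ] {D : ℝ}
    (h : ∀ f : Ω → ℝ, Measurable f → ∀ M : ℝ, (∀ x, |f x| ≤ M) → dvFunctional μ ν f ≤ D) :
    μ ≪ ν := by
  refine Measure.AbsolutelyContinuous.mk fun A hA hνA => ?_
  by_contra hμA
  have hpos : 0 < μ.real A := ENNReal.toReal_pos hμA (measure_ne_top _ _)
  set c := (|D| + 1) / μ.real A with hc
  have hbound (x : Ω) : |A.indicator (fun _ => c) x| ≤ |c| := by
    by_cases hx : x ∈ A <;> simp [hx]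
  have hle := h _ (measurable_const.indicator hA) |c| hbound
  rw [dvFunctional_indicator_const hA hνA, hc, div_mul_cancel₀ _ hpos.ne'] at hle
  linarith [le_abs_self D]

lemma integrable_exp_of_abs_le {ν : Measure Ω} [IsFiniteMeasure ν] {f : Ω → ℝ} {M : ℝ}
    (hf : Measurable f) (hM : ∀ x, |f x| ≤ M) : Integrable (fun x => exp (f x)) ν :=
  .of_bound (by fun_prop) (exp M) <| ae_of_all _ fun x => by
    rw [Real.norm_eq_abs, Real.abs_exp]
    exact Real.exp_le_exp.2 (abs_le.1 (hM x)).2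

lemma integrable_of_abs_le {ν : Measure Ω} [IsFiniteMeasure ν] {f : Ω → ℝ} {M : ℝ}
    (hf : Measurable f) (hM : ∀ x, |f x| ≤ M) : Integrable f ν :=
  .of_bound hf.aestronglyMeasurable M (ae_of_all _ hM)

variable {μ ν : Measure Ω} [IsFiniteMeasure μ] [IsFiniteMeasure ν] {f g : Ω → ℝ} {M : ℝ}

lemma integrable_dvFunctional_integrand (hμν : μ ≪ ν) (hf : Integrable f μ)
    (hexp : Integrable (fun x => exp (f x)) ν) :
    Integrable (fun x => (μ.rnDeriv ν x).toReal * f x - (exp (f x) - 1)) ν :=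
  ((integrable_rnDeriv_smul_iff hμν).2 hf).sub (hexp.sub (integrable_const 1))

lemma dvFunctional_eq_integral (hμν : μ ≪ ν) (hf : Integrable f μ)
    (hexp : Integrable (fun x => exp (f x)) ν) :
    dvFunctional μ ν f = ∫ x, ((μ.rnDeriv ν x).toReal * f x - (exp (f x) - 1)) ∂ν := by
  rw [dvFunctional, ← integral_rnDeriv_smul hμν]
  exact (integral_sub ((integrable_rnDeriv_smul_iff hμν).2 hf)
    (hexp.sub (integrable_const 1))).symm

lemma ofReal_dvFunctional_le_klDiv (hf : Integrable f μ)
    (hexp : Integrable (fun x => exp (f x)) ν) :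
    ENNReal.ofReal (dvFunctional μ ν f) ≤ klDiv μ ν := by
  by_cases hfin : klDiv μ ν = ∞
  · simp [hfin]
  obtain ⟨hμν, hllr⟩ := klDiv_ne_top_iff.1 hfin
  rw [ENNReal.ofReal_le_iff_le_toReal hfin, dvFunctional_eq_integral hμν hf hexp,
    toReal_klDiv_eq_integral_klFun hμν]
  exact integral_mono (integrable_dvFunctional_integrand hμν hf hexp)
    ((integrable_klFun_rnDeriv_iff hμν).2 hllr)
    fun x => mul_sub_exp_sub_one_le_klFun ENNReal.toReal_nonneg (f x)

theorem klDiv_le_of_dvFunctional_le {D : ℝ}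
    (h : ∀ f : Ω → ℝ, Measurable f → ∀ M : ℝ, (∀ x, |f x| ≤ M) → dvFunctional μ ν f ≤ D) :
    klDiv μ ν ≤ ENNReal.ofReal D := by
  have hμν : μ ≪ ν := absolutelyContinuous_of_dvFunctional_le h
  let ρ : Ω → ℝ := fun x => (μ.rnDeriv ν x).toReal
  have hρ : Measurable ρ := (Measure.measurable_rnDeriv μ ν).ennreal_toReal
  let f : ℕ → Ω → ℝ := fun n x => log (expClamp n (ρ x))
  let φ : ℕ → Ω → ℝ := fun n x => ρ x * f n x - (exp (f n x) - 1)
  have hf (n : ℕ) : Measurable (f n) := (measurable_log_expClamp n).comp hρ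
  have hfn (n : ℕ) (x : Ω) : |f n x| ≤ n := abs_log_expClamp_le n (ρ x)
  have hφ (n : ℕ) : Measurable (φ n) := by fun_prop
  have hlintegral (n : ℕ) : ∫⁻ x, ENNReal.ofReal (φ n x) ∂ν ≤ ENNReal.ofReal D := by
    have hint := integrable_of_abs_le (ν := μ) (hf n) (hfn n)
    have hexp := integrable_exp_of_abs_le (ν := ν) (hf n) (hfn n)
    rw [← ofReal_integral_eq_lintegral_ofReal (integrable_dvFunctional_integrand hμν hint hexp)
      (ae_of_all _ fun x => klFun_approx_nonneg n (ρ x)), ← dvFunctional_eq_integral hμν hint hexp]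
    exact ENNReal.ofReal_le_ofReal (h (f n) (hf n) n (hfn n))
  have hlim (x : Ω) :
      Tendsto (fun n => ENNReal.ofReal (φ n x)) atTop (𝓝 (ENNReal.ofReal (klFun (ρ x)))) :=
    ENNReal.tendsto_ofReal (tendsto_klFun_approx ENNReal.toReal_nonneg)
  calc klDiv μ ν = ∫⁻ x, ENNReal.ofReal (klFun (ρ x)) ∂ν := klDiv_eq_lintegral_klFun_of_ac hμν
    _ = ∫⁻ x, liminf (fun n => ENNReal.ofReal (φ n x)) atTop ∂ν :=
        lintegral_congr fun x => (hlim x).liminf_eq.symm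
    _ ≤ liminf (fun n => ∫⁻ x, ENNReal.ofReal (φ n x) ∂ν) atTop :=
        lintegral_liminf_le fun n => (hφ n).ennreal_ofReal
    _ ≤ ENNReal.ofReal D := liminf_le_of_le (by isBoundedDefault) fun b hb => by
        obtain ⟨n, hn⟩ := hb.exists
        exact hn.trans (hlintegral n)

lemma dvFunctional_le_add (hf : Measurable f) (hfM : ∀ x, |f x| ≤ M) (hg : Measurable g)
    (hgM : ∀ x, |g x| ≤ M) :
    dvFunctional μ ν f ≤ dvFunctional μ ν g + exp M * ∫ x, |f x - g x| ∂(μ + ν) := by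
  have hint (κ : Measure Ω) [IsFiniteMeasure κ] : Integrable (fun x => f x - g x) κ :=
    (integrable_of_abs_le hf hfM).sub (integrable_of_abs_le hg hgM)
  have hexp {h : Ω → ℝ} (hh : Measurable h) (hhM : ∀ x, |h x| ≤ M) :
      Integrable (fun x => exp (h x) - 1) ν :=
    (integrable_exp_of_abs_le hh hhM).sub (integrable_const 1)
  have hlinear : ∫ x, f x ∂μ - ∫ x, g x ∂μ ≤ exp M * ∫ x, |f x - g x| ∂μ := by
    rw [← integral_sub (integrable_of_abs_le hf hfM) (integrable_of_abs_le hg hgM),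
      ← integral_const_mul]
    refine integral_mono (hint μ) ((hint μ).abs.const_mul _) fun x => ?_
    have hM : 0 ≤ M := (abs_nonneg _).trans (hfM x)
    exact (le_abs_self _).trans (le_mul_of_one_le_left (abs_nonneg _) (Real.one_le_exp hM))
  have hexponential : ∫ x, (exp (g x) - 1) ∂ν - ∫ x, (exp (f x) - 1) ∂ν ≤
      exp M * ∫ x, |f x - g x| ∂ν := by
    rw [← integral_sub (hexp hg hgM) (hexp hf hfM), ← integral_const_mul]
    refine integral_mono ((hexp hg hgM).sub (hexp hf hfM)) ((hint ν).abs.const_mul _) fun x => ?_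
    simpa only [sub_sub_sub_cancel_right, abs_sub_comm] using
      exp_sub_exp_le (b := f x) (abs_le.1 (hgM x)).2
  rw [integral_add_measure (hint μ).abs (hint ν).abs, dvFunctional, dvFunctional]
  linarith

section Topology

variable [TopologicalSpace Ω]

lemma continuous_dvFunctional_right (μ : Measure Ω) [OpensMeasurableSpace Ω] (f : Ω →ᵇ ℝ) :
    Continuous fun ν : FiniteMeasure Ω => dvFunctional μ ν f := by
  let expf : Ω →ᵇ ℝ := .ofNormedAddCommGroup (fun x => exp (f x)) (by fun_prop) (exp ‖f‖)
    fun x => by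
      rw [Real.norm_eq_abs, Real.abs_exp]
      exact Real.exp_le_exp.2 ((le_abs_self _).trans (f.norm_coe_le_norm x))
  exact continuous_const.sub
    (FiniteMeasure.continuous_integral_boundedContinuousFunction (expf - .const Ω 1))

variable [TopologicalSpace.PseudoMetrizableSpace Ω] [BorelSpace Ω]

lemma dvFunctional_le_of_forall_boundedContinuous {D : ℝ}
    (h : ∀ g : Ω →ᵇ ℝ, dvFunctional μ ν g ≤ D) (hf : Measurable f) (hM : ∀ x, |f x| ≤ M) :
    dvFunctional μ ν f ≤ D := by
  rcases isEmpty_or_nonempty Ω with hΩ | ⟨⟨x₀⟩⟩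
  · rw [Subsingleton.elim f (0 : Ω →ᵇ ℝ)]
    exact h 0
  have hM0 : 0 ≤ M := (abs_nonneg _).trans (hM x₀)
  refine le_of_forall_pos_le_add fun ε hε => ?_
  obtain ⟨g, hg, -⟩ := (integrable_of_abs_le (ν := μ + ν) hf hM)
    |>.exists_boundedContinuous_integral_sub_le (div_pos hε (Real.exp_pos M))
  have hint (g : Ω →ᵇ ℝ) : Integrable (fun x => |f x - g x|) (μ + ν) :=
    ((integrable_of_abs_le hf hM).sub (g.integrable _)).abs
  calc dvFunctional μ ν f
      ≤ dvFunctional μ ν (boundedClamp M g) +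
          exp M * ∫ x, |f x - boundedClamp M g x| ∂(μ + ν) :=
        dvFunctional_le_add hf hM (boundedClamp M g).continuous.measurable
          (abs_boundedClamp_le hM0 g)
    _ ≤ D + exp M * (ε / exp M) := by
        gcongr
        · exact h _
        · exact (integral_mono (hint _) (hint g) fun x =>
            abs_sub_boundedClamp_le (hM x) g x).trans hg
    _ = D + ε := by rw [mul_div_cancel₀ _ (Real.exp_pos M).ne']

theorem klDiv_eq_iSup_boundedContinuous (μ ν : Measure Ω) [IsFiniteMeasure μ]
    [IsFiniteMeasure ν] :
    klDiv μ ν = ⨆ f : Ω →ᵇ ℝ, ENNReal.ofReal (dvFunctional μ ν f) := by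
  refine le_antisymm ?_ (iSup_le fun f => ofReal_dvFunctional_le_klDiv (f.integrable μ)
    (integrable_exp_of_abs_le f.continuous.measurable f.norm_coe_le_norm))
  by_cases hfin : ⨆ f : Ω →ᵇ ℝ, ENNReal.ofReal (dvFunctional μ ν f) = ∞
  · simp [hfin]
  rw [← ENNReal.ofReal_toReal hfin]
  refine klDiv_le_of_dvFunctional_le fun f hf M hM =>
    dvFunctional_le_of_forall_boundedContinuous (fun g => ?_) hf hM
  exact (ENNReal.ofReal_le_iff_le_toReal hfin).1
    (le_iSup (fun f : Ω →ᵇ ℝ => ENNReal.ofReal (dvFunctional μ ν f)) g)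

theorem lowerSemicontinuous_klDiv_right (μ : Measure Ω) [IsFiniteMeasure μ] :
    LowerSemicontinuous fun ν : FiniteMeasure Ω => klDiv μ ν := by
  simp only [klDiv_eq_iSup_boundedContinuous]
  exact lowerSemicontinuous_iSup fun f =>
    (ENNReal.continuous_ofReal.comp (continuous_dvFunctional_right μ f)).lowerSemicontinuous

end Topology

end KullbackLeibler

section CompactSupport

open Filter Topology Set BoundedContinuousFunction

variable {Ω : Type*} [MeasurableSpace Ω] {K : Set Ω} {μ : ProbabilityMeasure Ω}

/-- The probability measures on `Ω` carried by `K`: the set `P(K)`, viewed inside `P(Ω)`. -/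
def probabilityMeasuresOn (K : Set Ω) : Set (ProbabilityMeasure Ω) :=
  {μ | (μ : Measure Ω) Kᶜ = 0}

lemma ae_mem_of_mem_probabilityMeasuresOn (hμ : μ ∈ probabilityMeasuresOn K) :
    ∀ᵐ x ∂(μ : Measure Ω), x ∈ K := hμ

lemma prod_self_mem_probabilityMeasuresOn (hμ : μ ∈ probabilityMeasuresOn K) :
    μ.prod μ ∈ probabilityMeasuresOn (K ×ˢ K) := by
  have hae : ∀ᵐ p ∂(μ : Measure Ω).prod μ, p.1 ∈ K ∧ p.2 ∈ K :=
    (Measure.quasiMeasurePreserving_fst.ae (ae_mem_of_mem_probabilityMeasuresOn hμ)).and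
      (Measure.quasiMeasurePreserving_snd.ae (ae_mem_of_mem_probabilityMeasuresOn hμ))
  exact hae

variable [TopologicalSpace Ω]

lemma isCompact_probabilityMeasuresOn [T4Space Ω] [BorelSpace Ω] (hK : IsCompact K) :
    IsCompact (probabilityMeasuresOn K) := by
  convert isCompact_setOfPred_probabilityMeasure_mass_eq_compl_isCompact_le (u := fun _ => 0)
    (K := fun _ => K) tendsto_const_nhds (fun _ => hK) (Or.inl inferInstance) using 1
  ext μ
  simp [probabilityMeasuresOn, ProbabilityMeasure.null_iff_toMeasure_null]

lemma integrable_of_mem_probabilityMeasuresOn [T2Space Ω] [OpensMeasurableSpace Ω]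
    (hK : IsCompact K) {f : Ω → ℝ} (hf : ContinuousOn f K) (hμ : μ ∈ probabilityMeasuresOn K) :
    Integrable f (μ : Measure Ω) := by
  rw [← Measure.restrict_eq_self_of_ae_mem (ae_mem_of_mem_probabilityMeasuresOn hμ)]
  exact hf.integrableOn_compact' hK hK.measurableSet

lemma continuousOn_integral_probabilityMeasuresOn [T4Space Ω] [OpensMeasurableSpace Ω]
    (hK : IsCompact K) {f : Ω → ℝ} (hf : ContinuousOn f K) :
    ContinuousOn (fun μ : ProbabilityMeasure Ω => ∫ x, f x ∂(μ : Measure Ω))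
      (probabilityMeasuresOn K) := by
  have : CompactSpace K := isCompact_iff_compactSpace.1 hK
  obtain ⟨g, -, hg⟩ := exists_extension_norm_eq_of_isClosedEmbedding
    (mkOfCompact ⟨K.domRestrict f, hf.domRestrict⟩) hK.isClosed.isClosedEmbedding_subtypeVal
  refine (ProbabilityMeasure.continuous_integral_boundedContinuousFunction g).continuousOn.congr
    fun μ hμ => integral_congr_ae ?_
  filter_upwards [ae_mem_of_mem_probabilityMeasuresOn hμ] with x hx
  exact (congrFun hg ⟨x, hx⟩).symm

end CompactSupport

section Maximizer

open Set ENNReal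

theorem exists_isMaxOn_sub_toReal {X : Type*} [TopologicalSpace X] {K : Set X} (hK : IsCompact K)
    {P : X → ℝ} (hP : UpperSemicontinuousOn P K) {D : X → ℝ≥0∞}
    (hD : LowerSemicontinuousOn D K) (hfin : ∃ x ∈ K, D x ≠ ∞) :
    ∃ x ∈ {x ∈ K | D x ≠ ∞}, IsMaxOn (fun x => P x - (D x).toReal) {x ∈ K | D x ≠ ∞} x := by
  obtain ⟨x₀, hx₀, hDx₀⟩ := hfin
  obtain ⟨C, hC⟩ := hP.bddAbove_of_isCompact hK
  -- Adding a constant makes `-P` nonnegative, so that `D - P` can be minimised in `ℝ≥0∞`.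
  let G : X → ℝ≥0∞ := fun x => D x + ENNReal.ofReal (C - P x)
  have hG : LowerSemicontinuousOn G K :=
    hD.add ((ENNReal.continuous_ofReal.comp (continuous_const.sub continuous_id))
      |>.comp_upperSemicontinuousOn_antitone hP fun _ _ h =>
        ENNReal.ofReal_le_ofReal (sub_le_sub_left h C))
  have hGtoReal {x : X} (hx : x ∈ {x ∈ K | D x ≠ ∞}) :
      (G x).toReal = (D x).toReal + (C - P x) := by
    rw [ENNReal.toReal_add hx.2 ofReal_ne_top,
      ENNReal.toReal_ofReal (sub_nonneg.2 (hC (mem_image_of_mem P hx.1)))]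
  obtain ⟨x, hxK, hxmin⟩ := hG.exists_isMinOn ⟨x₀, hx₀⟩ hK
  have hGx : G x ≠ ∞ := ne_top_of_le_ne_top (add_ne_top.2 ⟨hDx₀, ofReal_ne_top⟩) (hxmin hx₀)
  have hx : x ∈ {x ∈ K | D x ≠ ∞} := ⟨hxK, (add_ne_top.1 hGx).1⟩
  refine ⟨x, hx, fun y hy => ?_⟩
  have hle : (G x).toReal ≤ (G y).toReal :=
    ENNReal.toReal_mono (add_ne_top.2 ⟨hy.2, ofReal_ne_top⟩) (hxmin hy.1)
  rw [hGtoReal hx, hGtoReal hy] at hle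
  change P y - (D y).toReal ≤ P x - (D x).toReal
  linarith

end Maximizer

section UnitInterval

open InformationTheory Set Filter Topology Function ENNReal

instance : IsProbabilityMeasure leb01 := ⟨by simp [leb01]⟩

variable {σ : ℝ → ℝ → ℝ} {μ : ProbabilityMeasure ℝ} {C : ℝ}

lemma Pfun_nonneg (σ : ℝ → ℝ → ℝ) (μ : Measure ℝ) : 0 ≤ Pfun σ μ :=
  integral_nonneg fun _ => integral_nonneg fun _ => sq_nonneg _

lemma Pfun_eq_integral_prod (hσ : ContinuousOn (uncurry σ) (Icc 0 1 ×ˢ Icc 0 1))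
    (hμ : μ ∈ probabilityMeasuresOn (Icc 0 1)) :
    Pfun σ μ = ∫ p, uncurry σ p ^ 2 ∂(μ.prod μ : Measure (ℝ × ℝ)) :=
  (integral_prod _ (integrable_of_mem_probabilityMeasuresOn (isCompact_Icc.prod isCompact_Icc)
    (hσ.pow 2) (prod_self_mem_probabilityMeasuresOn hμ))).symm

lemma Pfun_le (hσ : ContinuousOn (uncurry σ) (Icc 0 1 ×ˢ Icc 0 1))
    (hC : ∀ x ∈ Icc (0 : ℝ) 1, ∀ y ∈ Icc (0 : ℝ) 1, σ x y ^ 2 ≤ C)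
    (hμ : μ ∈ probabilityMeasuresOn (Icc 0 1)) : Pfun σ μ ≤ C := by
  have hprod := prod_self_mem_probabilityMeasuresOn hμ
  rw [Pfun_eq_integral_prod hσ hμ]
  calc ∫ p, uncurry σ p ^ 2 ∂(μ.prod μ : Measure (ℝ × ℝ))
      ≤ ∫ _, C ∂(μ.prod μ : Measure (ℝ × ℝ)) := by
        refine integral_mono_ae (integrable_of_mem_probabilityMeasuresOn
          (isCompact_Icc.prod isCompact_Icc) (hσ.pow 2) hprod) (integrable_const C) ?_
        filter_upwards [ae_mem_of_mem_probabilityMeasuresOn hprod] with p hp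
        exact hC p.1 hp.1 p.2 hp.2
    _ = C := by simp

lemma continuousOn_Pfun (hσ : ContinuousOn (uncurry σ) (Icc 0 1 ×ˢ Icc 0 1)) :
    ContinuousOn (fun μ : ProbabilityMeasure ℝ => Pfun σ μ) (probabilityMeasuresOn (Icc 0 1)) := by
  have hprod : Continuous fun μ : ProbabilityMeasure ℝ => μ.prod μ :=
    ProbabilityMeasure.continuous_prod.comp (continuous_id.prodMk continuous_id)
  exact ((continuousOn_integral_probabilityMeasuresOn (isCompact_Icc.prod isCompact_Icc)
    (hσ.pow 2)).comp hprod.continuousOn fun _ => prod_self_mem_probabilityMeasuresOn).congr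
      fun _ => Pfun_eq_integral_prod hσ

/-- The probability measures on `[0,1]` with `D(Leb‖μ) < ∞`, over which the supremum `F(σ,θ)` is
taken. -/
def admissible : Set (ProbabilityMeasure ℝ) :=
  {μ ∈ probabilityMeasuresOn (Icc 0 1) | klDiv leb01 μ ≠ ∞}

/-- The objective `θ² P(σ,μ) - (1/2) D(Leb‖μ)` with values in `ℝ`; it has this meaning only for
`μ` in `admissible`, since `ENNReal.toReal ∞ = 0`. -/
def objective (σ : ℝ → ℝ → ℝ) (θ : ℝ) (μ : ProbabilityMeasure ℝ) : ℝ :=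
  θ ^ 2 * Pfun σ μ - 1 / 2 * (klDiv leb01 μ).toReal

lemma valSet_eq_image (σ : ℝ → ℝ → ℝ) (θ : ℝ) : valSet σ θ = objective σ θ '' admissible := by
  have hobjective {μ : ProbabilityMeasure ℝ} (hac : leb01 ≪ μ) :
      objective σ θ μ = θ ^ 2 * Pfun σ μ - 1 / 2 * klLeb μ := by
    rw [objective, toReal_klDiv_of_measure_eq hac (by simp)]
    rfl
  ext r
  constructor
  · rintro ⟨μ, hprob, hsupp, hac, hint, rfl⟩
    exact ⟨⟨μ, hprob⟩, ⟨hsupp, klDiv_ne_top hac hint⟩, hobjective hac⟩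
  · rintro ⟨μ, ⟨hsupp, hfin⟩, rfl⟩
    obtain ⟨hac, hint⟩ := klDiv_ne_top_iff.1 hfin
    exact ⟨μ, inferInstance, hsupp, hac, hint, hobjective hac⟩

lemma admissible_nonempty : admissible.Nonempty :=
  ⟨⟨leb01, inferInstance⟩, ae_restrict_mem measurableSet_Icc, by simp⟩

lemma exists_isMaxOn_objective (hσ : ContinuousOn (uncurry σ) (Icc 0 1 ×ˢ Icc 0 1)) (θ : ℝ) :
    ∃ μ ∈ admissible, IsMaxOn (objective σ θ) admissible μ := by
  have hkl : LowerSemicontinuous fun μ : ProbabilityMeasure ℝ => klDiv leb01 μ :=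
    (lowerSemicontinuous_klDiv_right leb01).comp
      ProbabilityMeasure.toFiniteMeasure_continuous
  obtain ⟨μ, hμ, hmax⟩ := exists_isMaxOn_sub_toReal (isCompact_probabilityMeasuresOn isCompact_Icc)
    ((continuousOn_Pfun hσ).const_smul (2 * θ ^ 2)).upperSemicontinuousOn
    (hkl.lowerSemicontinuousOn _) admissible_nonempty
  refine ⟨μ, hμ, fun ν hν => ?_⟩
  have hle : 2 * θ ^ 2 * Pfun σ ν - (klDiv leb01 ν).toReal ≤
      2 * θ ^ 2 * Pfun σ μ - (klDiv leb01 μ).toReal := hmax hν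
  change objective σ θ ν ≤ objective σ θ μ
  unfold objective
  linarith

lemma isGreatest_Fsup (hσ : ContinuousOn (uncurry σ) (Icc 0 1 ×ˢ Icc 0 1)) (θ : ℝ) :
    IsGreatest (valSet σ θ) (Fsup σ θ) := by
  obtain ⟨μ, hμ, hmax⟩ := exists_isMaxOn_objective hσ θ
  have hgreatest : IsGreatest (valSet σ θ) (objective σ θ μ) := by
    rw [valSet_eq_image]
    exact ⟨mem_image_of_mem _ hμ, forall_mem_image.2 hmax⟩
  rwa [Fsup, hgreatest.csSup_eq]

lemma Fsup_sub_Fsup_le (hσ : ContinuousOn (uncurry σ) (Icc 0 1 ×ˢ Icc 0 1))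
    (hC : ∀ x ∈ Icc (0 : ℝ) 1, ∀ y ∈ Icc (0 : ℝ) 1, σ x y ^ 2 ≤ C) (θ θ' : ℝ) :
    Fsup σ θ - Fsup σ θ' ≤ C * |θ ^ 2 - θ' ^ 2| := by
  obtain ⟨μ, hμ, hθ⟩ : Fsup σ θ ∈ objective σ θ '' admissible :=
    valSet_eq_image σ θ ▸ (isGreatest_Fsup hσ θ).1
  have hθ' : objective σ θ' μ ≤ Fsup σ θ' :=
    (isGreatest_Fsup hσ θ').2 (valSet_eq_image σ θ' ▸ mem_image_of_mem _ hμ)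
  calc Fsup σ θ - Fsup σ θ' ≤ objective σ θ μ - objective σ θ' μ := by linarith
    _ = Pfun σ μ * (θ ^ 2 - θ' ^ 2) := by
        unfold objective
        ring
    _ ≤ Pfun σ μ * |θ ^ 2 - θ' ^ 2| :=
        mul_le_mul_of_nonneg_left (le_abs_self _) (Pfun_nonneg σ μ)
    _ ≤ C * |θ ^ 2 - θ' ^ 2| :=
        mul_le_mul_of_nonneg_right (Pfun_le hσ hC hμ.1) (abs_nonneg _)

lemma abs_Fsup_sub_Fsup_le (hσ : ContinuousOn (uncurry σ) (Icc 0 1 ×ˢ Icc 0 1))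
    (hC : ∀ x ∈ Icc (0 : ℝ) 1, ∀ y ∈ Icc (0 : ℝ) 1, σ x y ^ 2 ≤ C) (θ θ' : ℝ) :
    |Fsup σ θ - Fsup σ θ'| ≤ C * |θ ^ 2 - θ' ^ 2| := by
  refine abs_sub_le_iff.2 ⟨Fsup_sub_Fsup_le hσ hC θ θ', ?_⟩
  rw [abs_sub_comm]
  exact Fsup_sub_Fsup_le hσ hC θ' θ

lemma sq_le_sSup_sq (hσ : ContinuousOn (uncurry σ) (Icc 0 1 ×ˢ Icc 0 1)) :
    ∀ x ∈ Icc (0 : ℝ) 1, ∀ y ∈ Icc (0 : ℝ) 1, σ x y ^ 2 ≤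
      sSup {v : ℝ | ∃ x ∈ Icc (0 : ℝ) 1, ∃ y ∈ Icc (0 : ℝ) 1, v = σ x y ^ 2} := by
  obtain ⟨C, hC⟩ := (isCompact_Icc.prod isCompact_Icc).bddAbove_image (hσ.pow 2)
  refine fun x hx y hy => le_csSup ⟨C, ?_⟩ ⟨x, hx, y, hy, rfl⟩
  rintro _ ⟨x, hx, y, hy, rfl⟩
  exact hC ⟨(x, y), ⟨hx, hy⟩, rfl⟩

lemma continuous_of_abs_sub_le_sq {F : ℝ → ℝ}
    (hF : ∀ θ θ', |F θ - F θ'| ≤ C * |θ ^ 2 - θ' ^ 2|) : Continuous F := by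
  refine continuous_iff_continuousAt.2 fun θ => tendsto_iff_dist_tendsto_zero.2 <|
    squeeze_zero (fun _ => dist_nonneg) (fun t => hF t θ) ?_
  have hcont : Continuous fun t : ℝ => C * |t ^ 2 - θ ^ 2| := by fun_prop
  simpa using hcont.tendsto θ

theorem F_attained_and_continuous_general (σ : ℝ → ℝ → ℝ)
    (hσ : ContinuousOn (uncurry σ) (Icc (0 : ℝ) 1 ×ˢ Icc (0 : ℝ) 1)) :
    (∀ θ : ℝ, IsGreatest (valSet σ θ) (Fsup σ θ)) ∧
    (∀ θ θ' : ℝ, |Fsup σ θ - Fsup σ θ'| ≤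
      sSup {v : ℝ | ∃ x ∈ Icc (0 : ℝ) 1, ∃ y ∈ Icc (0 : ℝ) 1, v = σ x y ^ 2} *
        |θ ^ 2 - θ' ^ 2|) ∧
    Continuous (Fsup σ) := by
  have hlip := abs_Fsup_sub_Fsup_le hσ (sq_le_sSup_sq hσ)
  exact ⟨isGreatest_Fsup hσ, hlip, continuous_of_abs_sub_le_sq hlip⟩

end UnitInterval

/-- For a bounded continuous symmetric `σ : [0,1]² → [0,∞)`:
(i) for every `θ > 0` the supremum defining `F(σ,θ)` is attained by some probability
measure on `[0,1]`; (ii) `|F(σ,θ) − F(σ,θ')| ≤ (sup σ²)·|θ² − θ'²|`, so `F(σ,·)` is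
continuous in `θ`. -/
theorem F_attained_and_continuous
    (σ : ℝ → ℝ → ℝ)
    (hσcont : ContinuousOn (Function.uncurry σ) (Set.Icc (0:ℝ) 1 ×ˢ Set.Icc (0:ℝ) 1))
    (hσnn : ∀ x ∈ Set.Icc (0:ℝ) 1, ∀ y ∈ Set.Icc (0:ℝ) 1, 0 ≤ σ x y)
    (hσsymm : ∀ x ∈ Set.Icc (0:ℝ) 1, ∀ y ∈ Set.Icc (0:ℝ) 1, σ x y = σ y x)
    (B : ℝ) (hσbdd : ∀ x ∈ Set.Icc (0:ℝ) 1, ∀ y ∈ Set.Icc (0:ℝ) 1, σ x y ≤ B) :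
    (∀ θ : ℝ, 0 < θ → ∃ r : ℝ, IsGreatest (valSet σ θ) r) ∧
    (∀ θ θ' : ℝ, 0 < θ → 0 < θ' →
      |Fsup σ θ - Fsup σ θ'| ≤
        sSup {v : ℝ | ∃ x ∈ Set.Icc (0:ℝ) 1, ∃ y ∈ Set.Icc (0:ℝ) 1, v = σ x y ^ 2} *
          |θ ^ 2 - θ' ^ 2|) ∧
    ContinuousOn (Fsup σ) (Set.Ioi (0:ℝ)) := by
  obtain ⟨hattained, hlip, hcont⟩ := F_attained_and_continuous_general σ hσcont
  exact ⟨fun θ _ => ⟨_, hattained θ⟩, fun θ θ' _ _ => hlip θ θ', hcont.continuousOn⟩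

end
end
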